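/- arXiv:2512.16116 — 4 statements merged into one kernel-verified Lean document; each statement's English description precedes it below -/
import Mathlib

section
/- Let Φ : G → Aut(H) be a semi-trivial action of a brace (G,·_G,∘_G) on a brace (H,·_H,∘_H). Then the set H × G equipped with the operations (h,a) ·⋊ (k,b) = (h ·_H k, a ·_G b) and (h,a) ∘⋊ (k,b) = (h ∘_H Φ(a)(k), a ∘_G b) is a brace (the semi-direct product H ⋊_Φ G). -/
structure IsGroup {G : Type*} (op : G → G → G) (e : G) (inv : G → G) : Prop where
  assoc : ∀ a b c, op (op a b) c = op a (op b c)
  one_op : ∀ a, op e a = a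
  op_one : ∀ a, op a e = a
  inv_op : ∀ a, op (inv a) a = e
  op_inv : ∀ a, op a (inv a) = e

/-- A brace: an abelian group `(G, mul)` and a group `(G, circ)` with the compatibility
`a ∘ (b · c) = (a ∘ b) · a⁻¹ · (a ∘ c)`. -/
structure IsBrace {G : Type*} (mul : G → G → G) (e : G) (inv : G → G)
    (circ : G → G → G) (ce : G) (cinv : G → G) : Prop where
  mul_group : IsGroup mul e inv
  mul_comm : ∀ a b, mul a b = mul b a
  circ_group : IsGroup circ ce cinv
  compat : ∀ a b c, circ a (mul b c) = mul (mul (circ a b) (inv a)) (circ a c)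

/-- A homomorphism of braces preserves both operations. -/
def IsBraceHom {G H : Type*} (mulG circG : G → G → G) (mulH circH : H → H → H)
    (f : G → H) : Prop :=
  (∀ a b, f (mulG a b) = mulH (f a) (f b)) ∧ (∀ a b, f (circG a b) = circH (f a) (f b))

/-- A brace automorphism: a bijective self-homomorphism. -/
def IsBraceAut {H : Type*} (mulH circH : H → H → H) (f : H → H) : Prop :=
  Function.Bijective f ∧ IsBraceHom mulH circH mulH circH f

/-- A semi-trivial action of the brace `G` on the brace `H`: each `Φ a` is a brace
automorphism of `H` and `Φ (a ∘ b) = Φ a ∘ Φ b`. -/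
def IsSemiTrivialAction {G H : Type*} (circG : G → G → G)
    (mulH circH : H → H → H) (Φ : G → H → H) : Prop :=
  (∀ a, IsBraceAut mulH circH (Φ a)) ∧ (∀ a b h, Φ (circG a b) h = Φ a (Φ b h))

/-- A relative Rota-Baxter operator on the brace `G` with respect to the semi-trivial
action `Φ` of `G` on `H`. -/
def IsRelRBO {G H : Type*} (mulG circG : G → G → G) (mulH circH : H → H → H)
    (Φ : G → H → H) (B : H → G) : Prop :=
  (∀ h k, mulG (B h) (B k) = B (mulH h k)) ∧
  (∀ h k, circG (B h) (B k) = B (circH h (Φ (B h) k)))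

/-- An enhanced relative Rota-Baxter operator. -/
def IsEnhancedRelRBO {G H : Type*} (mulG circG : G → G → G) (mulH circH : H → H → H)
    (Φ : G → H → H) (B : H → G) : Prop :=
  (∀ h k, mulG (B h) (B k) = B (mulH h k)) ∧
  (∀ (a : G) (h k : H), circG (mulG (B h) a) (B k)
      = mulG (B (circH h (Φ (mulG (B h) a) k))) a)

/-- A post-group: a group `(G, circ)` with an operation `tri` such that each left
multiplication `tri a` is an automorphism of `(G, circ)` and the weighted associativity
`(a ∘ (a ⊳ b)) ⊳ c = a ⊳ (b ⊳ c)` holds. -/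
structure IsPostGroup {G : Type*} (circ : G → G → G) (ce : G) (cinv : G → G)
    (tri : G → G → G) : Prop where
  circ_group : IsGroup circ ce cinv
  tri_bij : ∀ a, Function.Bijective (tri a)
  tri_circ : ∀ a b c, tri a (circ b c) = circ (tri a b) (tri a c)
  weighted : ∀ a b c, tri (circ a (tri a b)) c = tri a (tri b c)

/-- A post-brace: a brace `(G, mul, circ)` with `tri` making `(G, circ, tri)` a post-group
and `a ⊳ (b · c) = (a ⊳ b) · (a ⊳ c)`. -/
structure IsPostBrace {G : Type*} (mul : G → G → G) (e : G) (inv : G → G)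
    (circ : G → G → G) (ce : G) (cinv : G → G) (tri : G → G → G) : Prop where
  brace : IsBrace mul e inv circ ce cinv
  post : IsPostGroup circ ce cinv tri
  tri_mul : ∀ a b c, tri a (mul b c) = mul (tri a b) (tri a c)

/-- A two-sided brace. -/
def IsTwoSidedBrace {G : Type*} (mul : G → G → G) (e : G) (inv : G → G)
    (circ : G → G → G) (ce : G) (cinv : G → G) : Prop :=
  IsBrace mul e inv circ ce cinv ∧
  ∀ a b c, circ (mul a b) c = mul (mul (circ a c) (inv c)) (circ b c)

/-- The adjoint action of the `circ`-group: `Ad∘_a(b) = a ∘ b ∘ ā`. -/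
def adC {G : Type*} (circ : G → G → G) (cinv : G → G) (a b : G) : G :=
  circ (circ a b) (cinv a)

/-- A Rota-Baxter operator on a two-sided brace (w.r.t. the adjoint semi-trivial action). -/
def IsRBTwoSided {G : Type*} (mul circ : G → G → G) (cinv : G → G) (B : G → G) : Prop :=
  (∀ a b, mul (B a) (B b) = B (mul a b)) ∧
  (∀ a b, circ (B a) (B b) = B (circ a (adC circ cinv (B a) b)))

/-- An enhanced Rota-Baxter operator on a two-sided brace. -/
def IsEnhancedRBTwoSided {G : Type*} (mul circ : G → G → G) (cinv : G → G)
    (B : G → G) : Prop :=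
  IsRBTwoSided mul circ cinv B ∧
  ∀ a b x, circ (mul (B a) x) (B b)
      = mul (B (circ a (adC circ cinv (mul (B a) x) b))) x

/-- `R × Id` on `X × X × X`. -/
def YB12 {X : Type*} (R : X × X → X × X) : X × X × X → X × X × X :=
  fun p => ((R (p.1, p.2.1)).1, (R (p.1, p.2.1)).2, p.2.2)

/-- `Id × R` on `X × X × X`. -/
def YB23 {X : Type*} (R : X × X → X × X) : X × X × X → X × X × X :=
  fun p => (p.1, R p.2)

/-- A set-theoretical solution of the Yang-Baxter equation. -/
def IsYBSolution {X : Type*} (R : X × X → X × X) : Prop :=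
  Function.Bijective R ∧
  YB12 R ∘ YB23 R ∘ YB12 R = YB23 R ∘ YB12 R ∘ YB23 R

/-- Non-degeneracy of a solution `R (a, b) = (φ_a b, ψ_b a)`. -/
def IsNonDegenerate {X : Type*} (R : X × X → X × X) : Prop :=
  (∀ a, Function.Bijective fun b => (R (a, b)).1) ∧
  (∀ b, Function.Bijective fun a => (R (a, b)).2)

/-- Involutivity of a solution: `R ∘ R = Id`. -/
def IsInvolutiveSol {X : Type*} (R : X × X → X × X) : Prop :=
  ∀ p, R (R p) = p

/-- A matched pair of groups `(G, H, σ)` with `σ (a, h) = (r a h, l a h)`. -/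
def IsMatchedPairOfGroups {G H : Type*} (opG : G → G → G) (eG : G)
    (opH : H → H → H) (eH : H) (r : G → H → H) (l : G → H → G) : Prop :=
  (∀ h, r eG h = h) ∧
  (∀ a b h, r a (r b h) = r (opG a b) h) ∧
  (∀ a b h, l (opG a b) h = opG (l a (r b h)) (l b h)) ∧
  (∀ a, l a eH = a) ∧
  (∀ a h k, l (l a h) k = l a (opH h k)) ∧
  (∀ a h k, r a (opH h k) = opH (r a h) (r (l a h) k))

/-- A left ideal of the brace with multiplication `op` (with unit `u`) and second
operation `cop`: a subgroup of the `op`-group such that `p⁻¹ op (p cop x) ∈ S`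
(expressed via the unique solution `r` of `op p r = cop p x`). -/
def IsLeftIdealOf {P : Type*} (op : P → P → P) (u : P) (cop : P → P → P)
    (S : Set P) : Prop :=
  u ∈ S ∧ (∀ p ∈ S, ∀ q ∈ S, op p q ∈ S) ∧
  (∀ p ∈ S, ∃ q ∈ S, op p q = u ∧ op q p = u) ∧
  (∀ p : P, ∀ x ∈ S, ∀ r, op p r = cop p x → r ∈ S)

/-- `I` is an ideal of the sub-brace `S` of the ambient brace: a subgroup of `(S, mul)`,
normal in `(S, mul)` and in `(S, circ)`, and a left ideal of `S`. -/
def IsIdealOfSub {G : Type*} (mul : G → G → G) (e : G) (inv : G → G)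
    (circ : G → G → G) (cinv : G → G) (S I : Set G) : Prop :=
  I ⊆ S ∧ e ∈ I ∧
  (∀ x ∈ I, ∀ y ∈ I, mul x y ∈ I) ∧ (∀ x ∈ I, inv x ∈ I) ∧
  (∀ s ∈ S, ∀ x ∈ I, mul (mul s x) (inv s) ∈ I) ∧
  (∀ s ∈ S, ∀ x ∈ I, circ (circ s x) (cinv s) ∈ I) ∧
  (∀ s ∈ S, ∀ x ∈ I, mul (inv s) (circ s x) ∈ I)

/-!
The dot-group of `H ⋊_Φ G` is the direct product, and its circle-group is the ordinary semidirect
product of `(H, ∘)` by `(G, ∘)`. The second needs `Φ` to be a unital action by group endomorphisms: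
`Φ 1` is idempotent and injective, hence the identity. Compatibility of the two operations holds
componentwise: since `Φ a` preserves the dot operation, the first component is the compatibility of
`H` at `h`, `Φ a k`, `Φ a l`.
-/

/-- The semidirect product operation on `H × G` twisting `opH` by `Φ : G → H → H`, with the acted-on
factor `H` first. -/
def semidirectOp {G H : Type*} (opH : H → H → H) (opG : G → G → G) (Φ : G → H → H)
    (p q : H × G) : H × G :=
  (opH p.1 (Φ p.2 q.1), opG p.2 q.2)

/-- The inverse for `semidirectOp`, namely `(h, a)⁻¹ = (Φ a⁻¹ h⁻¹, a⁻¹)`. -/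
def semidirectInv {G H : Type*} (invH : H → H) (invG : G → G) (Φ : G → H → H)
    (p : H × G) : H × G :=
  (Φ (invG p.2) (invH p.1), invG p.2)

namespace IsGroup

variable {G H : Type*} {opG : G → G → G} {eG : G} {invG : G → G}
  {opH : H → H → H} {eH : H} {invH : H → H}

theorem eq_one_of_op_self (hG : IsGroup opG eG invG) {a : G} (ha : opG a a = a) : a = eG :=
  calc
    a = opG (opG (invG a) a) a := by rw [hG.inv_op, hG.one_op]
    _ = opG (invG a) a := by rw [hG.assoc, ha]
    _ = eG := hG.inv_op a

theorem map_one (hG : IsGroup opG eG invG) (hH : IsGroup opH eH invH) {f : G → H}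
    (hf : ∀ a b, f (opG a b) = opH (f a) (f b)) : f eG = eH :=
  hH.eq_one_of_op_self (by rw [← hf, hG.one_op])

theorem semidirect (hH : IsGroup opH eH invH) (hG : IsGroup opG eG invG) {Φ : G → H → H}
    (one_apply : ∀ h, Φ eG h = h) (op_apply : ∀ a b h, Φ (opG a b) h = Φ a (Φ b h))
    (map_op : ∀ a h k, Φ a (opH h k) = opH (Φ a h) (Φ a k)) :
    IsGroup (semidirectOp opH opG Φ) (eH, eG) (semidirectInv invH invG Φ) := by
  have map_one (a : G) : Φ a eH = eH := hH.map_one hH (map_op a)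
  constructor
  case assoc =>
    rintro ⟨h, a⟩ ⟨k, b⟩ ⟨l, c⟩
    simp only [semidirectOp, map_op, op_apply, hH.assoc, hG.assoc]
  case one_op =>
    rintro ⟨h, a⟩
    simp only [semidirectOp, one_apply, hH.one_op, hG.one_op]
  case op_one =>
    rintro ⟨h, a⟩
    simp only [semidirectOp, map_one, hH.op_one, hG.op_one]
  case inv_op =>
    rintro ⟨h, a⟩
    simp only [semidirectOp, semidirectInv, ← map_op, hH.inv_op, map_one, hG.inv_op]
  case op_inv =>
    rintro ⟨h, a⟩
    simp only [semidirectOp, semidirectInv, ← op_apply, hG.op_inv, one_apply, hH.op_inv]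

theorem prod (hH : IsGroup opH eH invH) (hG : IsGroup opG eG invG) :
    IsGroup (fun p q : H × G => (opH p.1 q.1, opG p.2 q.2)) (eH, eG)
      (fun p => (invH p.1, invG p.2)) :=
  hH.semidirect hG (Φ := fun _ h => h) (fun _ => rfl) (fun _ _ _ => rfl) (fun _ _ _ => rfl)

end IsGroup

namespace IsSemiTrivialAction

variable {G H : Type*} {circG : G → G → G} {mulH circH : H → H → H} {Φ : G → H → H}

theorem circ_apply (hΦ : IsSemiTrivialAction circG mulH circH Φ) (a b : G) (h : H) :
    Φ (circG a b) h = Φ a (Φ b h) :=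
  hΦ.2 a b h

theorem injective (hΦ : IsSemiTrivialAction circG mulH circH Φ) (a : G) :
    Function.Injective (Φ a) :=
  (hΦ.1 a).1.injective

theorem map_mul (hΦ : IsSemiTrivialAction circG mulH circH Φ) (a : G) (h k : H) :
    Φ a (mulH h k) = mulH (Φ a h) (Φ a k) :=
  (hΦ.1 a).2.1 h k

theorem map_circ (hΦ : IsSemiTrivialAction circG mulH circH Φ) (a : G) (h k : H) :
    Φ a (circH h k) = circH (Φ a h) (Φ a k) :=
  (hΦ.1 a).2.2 h k

theorem one_apply {ceG : G} {cinvG : G → G} (hΦ : IsSemiTrivialAction circG mulH circH Φ)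
    (hG : IsGroup circG ceG cinvG) (h : H) : Φ ceG h = h :=
  hΦ.injective ceG (by rw [← hΦ.circ_apply, hG.one_op])

end IsSemiTrivialAction

/-- The semi-direct product `H ⋊_Φ G` of braces along a semi-trivial
action is a brace. -/
theorem statement1 {G H : Type*}
    (mulG : G → G → G) (eG : G) (invG : G → G)
    (circG : G → G → G) (ceG : G) (cinvG : G → G)
    (mulH : H → H → H) (eH : H) (invH : H → H)
    (circH : H → H → H) (ceH : H) (cinvH : H → H)
    (hG : IsBrace mulG eG invG circG ceG cinvG)
    (hH : IsBrace mulH eH invH circH ceH cinvH)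
    (Φ : G → H → H) (hΦ : IsSemiTrivialAction circG mulH circH Φ) :
    ∃ cinvP : H × G → H × G,
      IsBrace (fun p q => (mulH p.1 q.1, mulG p.2 q.2)) (eH, eG)
        (fun p => (invH p.1, invG p.2))
        (fun p q => (circH p.1 (Φ p.2 q.1), circG p.2 q.2)) (ceH, ceG) cinvP := by
  have circ_group : IsGroup (semidirectOp circH circG Φ) (ceH, ceG)
      (semidirectInv cinvH cinvG Φ) :=
    hH.circ_group.semidirect hG.circ_group (hΦ.one_apply hG.circ_group) hΦ.circ_apply hΦ.map_circ
  have compat_fst (h k l : H) (a : G) : circH h (Φ a (mulH k l)) =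
      mulH (mulH (circH h (Φ a k)) (invH h)) (circH h (Φ a l)) := by
    rw [hΦ.map_mul, hH.compat]
  exact ⟨semidirectInv cinvH cinvG Φ,
    { mul_group := hH.mul_group.prod hG.mul_group
      mul_comm := fun p q => Prod.ext (hH.mul_comm p.1 q.1) (hG.mul_comm p.2 q.2)
      circ_group := circ_group
      compat := fun p q r =>
        Prod.ext (compat_fst p.1 q.1 r.1 p.2) (hG.compat p.2 q.2 r.2) }⟩
end

section
/- Let B : H → G be a relative Rota-Baxter operator on a brace (G,·_G,∘_G) with respect to a semi-trivial action Φ : G → Aut(H). Define h ⊳_B k := Φ(B(h))(k). Then (H, ·_H, ∘_H, ⊳_B) is a post-brace, and its sub-adjacent brace (H, ·_H, ∗) with h ∗ k = h ∘_H (h ⊳_B k) coincides with the descendent brace (H, ·_H, ∘_B) where h ∘_B k = h ∘_H Φ(B(h))(k). -/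
theorem IsGroup.isPostGroup_of_action_of_rotaBaxter {G H : Type*} {circG : G → G → G}
    {circH : H → H → H} {ceH : H} {cinvH : H → H} {Φ : G → H → H} {B : H → G}
    (hH : IsGroup circH ceH cinvH) (bijective_Φ : ∀ a, Function.Bijective (Φ a))
    (Φ_circ : ∀ a h k, Φ a (circH h k) = circH (Φ a h) (Φ a k))
    (circ_Φ : ∀ a b h, Φ (circG a b) h = Φ a (Φ b h))
    (rotaBaxter : ∀ h k, circG (B h) (B k) = B (circH h (Φ (B h) k))) :
    IsPostGroup circH ceH cinvH (fun h k => Φ (B h) k) where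
  circ_group := hH
  tri_bij h := bijective_Φ (B h)
  tri_circ h := Φ_circ (B h)
  weighted h k l := calc
    Φ (B (circH h (Φ (B h) k))) l = Φ (circG (B h) (B k)) l := by rw [rotaBaxter]
    _ = Φ (B h) (Φ (B k) l) := circ_Φ (B h) (B k) l

theorem statement7_general {G H : Type*} {circG : G → G → G}
    {mulH : H → H → H} {eH : H} {invH : H → H}
    {circH : H → H → H} {ceH : H} {cinvH : H → H} {Φ : G → H → H} {B : H → G}
    (hH : IsBrace mulH eH invH circH ceH cinvH)
    (hΦ : IsSemiTrivialAction circG mulH circH Φ)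
    (rotaBaxter : ∀ h k, circG (B h) (B k) = B (circH h (Φ (B h) k))) :
    IsPostBrace mulH eH invH circH ceH cinvH (fun h k => Φ (B h) k) := by
  obtain ⟨aut, circ_Φ⟩ := hΦ
  have bijective_Φ (a : G) : Function.Bijective (Φ a) := (aut a).1
  have Φ_mul (a : G) : ∀ h k, Φ a (mulH h k) = mulH (Φ a h) (Φ a k) := (aut a).2.1
  have Φ_circ (a : G) : ∀ h k, Φ a (circH h k) = circH (Φ a h) (Φ a k) := (aut a).2.2
  exact
    { brace := hH
      post := hH.circ_group.isPostGroup_of_action_of_rotaBaxter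
        bijective_Φ Φ_circ circ_Φ rotaBaxter
      tri_mul := fun h => Φ_mul (B h) }

/-- A relative Rota-Baxter operator `B` induces a post-brace
`(H, ·_H, ∘_H, ⊳_B)` with `h ⊳_B k = Φ(B h)(k)`, whose sub-adjacent brace operation
`h ∗ k = h ∘_H (h ⊳_B k)` coincides with the descendent operation
`h ∘_B k = h ∘_H Φ(B h)(k)`. -/
theorem statement7 {G H : Type*}
    (mulG : G → G → G) (eG : G) (invG : G → G)
    (circG : G → G → G) (ceG : G) (cinvG : G → G)
    (mulH : H → H → H) (eH : H) (invH : H → H)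
    (circH : H → H → H) (ceH : H) (cinvH : H → H)
    (hG : IsBrace mulG eG invG circG ceG cinvG)
    (hH : IsBrace mulH eH invH circH ceH cinvH)
    (Φ : G → H → H) (hΦ : IsSemiTrivialAction circG mulH circH Φ)
    (B : H → G) (hB : IsRelRBO mulG circG mulH circH Φ B) :
    IsPostBrace mulH eH invH circH ceH cinvH (fun h k => Φ (B h) k) ∧
    (∀ h k, circH h ((fun h k => Φ (B h) k) h k) = circH h (Φ (B h) k)) :=
  ⟨statement7_general hH hΦ hB.2, fun _ _ => rfl⟩
end

section
/- Let (G,·_G,∘_G) and (H,·_H,∘_H) be braces, Φ : G → Aut(H) a semi-trivial action, and B : H → G a map. Equip the set H × G with the operations (h,a) • (k,b) = (h ·_H k, B(h ·_H k)⁻¹ ·_G B(h) ·_G a ·_G B(k) ·_G b) and (h,a) ⋆ (k,b) = (h ∘_H Φ(B(h) ·_G a)(k), B(h ∘_H Φ(B(h) ·_G a)(k))⁻¹ ·_G ((B(h) ·_G a) ∘_G (B(k) ·_G b))), obtained by transporting the semi-direct product brace structure of H ⋊_Φ G along the bijection ξ_B(h,a) = (h, B(h) ·_G a); this (H × G, •,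 ⋆) is a brace. Then (H × G, •, ⋆) admits a factorization through the left ideals H × {e_G} and {e_H} × G if and only if B is an enhanced relative Rota-Baxter operator on G with respect to Φ. -/
/-!
The bijection `ξ_B(h, a) = (h, B(h) · a)` carries the brace `(H × G, •, ⋆)` to the semi-direct
product `H ⋊_Φ G`, the subset `{e} × G` to itself, and `H × {e}` to the graph of `B`. In
`H ⋊_Φ G` the subset `{e} × G` is always a left ideal and always complements the graph, so the
factorization exists exactly when the graph is a left ideal. The graph is a subgroup precisely
when `B` is multiplicative, and in that case its stability under `p⁻¹ · (p ∘ x)`, evaluated at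
`p = (h, B(h) · a)` and `x = (k, B(k))`, is the enhanced Rota-Baxter identity.
-/

section Pullback

variable {P Q : Type*}

/-- The binary operation on `P` transported from `Q` along the bijection `ξ`. -/
def pullbackOp (ξ : P ≃ Q) (op : Q → Q → Q) : P → P → P :=
  fun p q => ξ.symm (op (ξ p) (ξ q))

theorem IsGroup.pullback {op : Q → Q → Q} {e : Q} {inv : Q → Q} (h : IsGroup op e inv)
    (ξ : P ≃ Q) : IsGroup (pullbackOp ξ op) (ξ.symm e) (fun p => ξ.symm (inv (ξ p))) where
  assoc := by simp [pullbackOp, h.assoc]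
  one_op := by simp [pullbackOp, h.one_op]
  op_one := by simp [pullbackOp, h.op_one]
  inv_op := by simp [pullbackOp, h.inv_op]
  op_inv := by simp [pullbackOp, h.op_inv]

theorem IsBrace.pullback {mul : Q → Q → Q} {e : Q} {inv : Q → Q} {circ : Q → Q → Q} {ce : Q}
    {cinv : Q → Q} (h : IsBrace mul e inv circ ce cinv) (ξ : P ≃ Q) :
    IsBrace (pullbackOp ξ mul) (ξ.symm e) (fun p => ξ.symm (inv (ξ p)))
      (pullbackOp ξ circ) (ξ.symm ce) (fun p => ξ.symm (cinv (ξ p))) where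
  mul_group := h.mul_group.pullback ξ
  mul_comm p q := congrArg ξ.symm (h.mul_comm _ _)
  circ_group := h.circ_group.pullback ξ
  compat := by simp [pullbackOp, h.compat]

theorem isLeftIdealOf_pullback_iff (ξ : P ≃ Q) {op : Q → Q → Q} {u : Q} {cop : Q → Q → Q}
    {S : Set Q} :
    IsLeftIdealOf (pullbackOp ξ op) (ξ.symm u) (pullbackOp ξ cop) (ξ ⁻¹' S) ↔
      IsLeftIdealOf op u cop S := by
  simp only [IsLeftIdealOf, pullbackOp, ξ.forall_congr_left, ξ.exists_congr_left,
    Set.mem_preimage, Equiv.apply_symm_apply, EmbeddingLike.apply_eq_iff_eq]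

/-- The brace with multiplication `op` (with unit `u`) and second operation `cop` admits a
factorization through the left ideals `I` and `J`. -/
def AdmitsFactorization (op : P → P → P) (u : P) (cop : P → P → P) (I J : Set P) : Prop :=
  IsLeftIdealOf op u cop I ∧ IsLeftIdealOf op u cop J ∧
    ∀ p, ∃! xy : P × P, xy.1 ∈ I ∧ xy.2 ∈ J ∧ p = op xy.1 xy.2

theorem admitsFactorization_pullback_iff (ξ : P ≃ Q) {op : Q → Q → Q} {u : Q}
    {cop : Q → Q → Q} {I J : Set Q} :
    AdmitsFactorization (pullbackOp ξ op) (ξ.symm u) (pullbackOp ξ cop) (ξ ⁻¹' I) (ξ ⁻¹' J) ↔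
      AdmitsFactorization op u cop I J := by
  refine and_congr (isLeftIdealOf_pullback_iff ξ) (and_congr (isLeftIdealOf_pullback_iff ξ) ?_)
  refine ξ.forall_congr fun p => (ξ.prodCongr ξ).existsUnique_congr fun xy => ?_
  simp [pullbackOp, Equiv.eq_symm_apply]

end Pullback

section Units

variable {G H : Type*}

theorem IsGroup.eq_unit_of_op_self {op : G → G → G} {e : G} {inv : G → G}
    (hG : IsGroup op e inv) {a : G} (ha : op a a = a) : a = e := by
  rw [← hG.inv_op a, ← congrArg (op (inv a)) ha, ← hG.assoc, hG.inv_op, hG.one_op]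

theorem IsBrace.circ_unit_eq {mul : G → G → G} {e : G} {inv : G → G} {circ : G → G → G} {ce : G}
    {cinv : G → G} (hG : IsBrace mul e inv circ ce cinv) : ce = e := by
  have inv_eq : inv ce = e := by
    simpa only [hG.mul_group.op_one, hG.mul_group.one_op, hG.circ_group.one_op]
      using (hG.compat ce e e).symm
  rw [← hG.mul_group.op_inv ce, inv_eq, hG.mul_group.op_one]

/-- The abelian group `(G, ·)` of a brace as a bundled instance. -/
abbrev IsBrace.commGroup {mul : G → G → G} {e : G} {inv : G → G} {circ : G → G → G} {ce : G}
    {cinv : G → G} (hG : IsBrace mul e inv circ ce cinv) : CommGroup G where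
  mul := mul
  one := e
  inv := inv
  mul_assoc := hG.mul_group.assoc
  one_mul := hG.mul_group.one_op
  mul_one := hG.mul_group.op_one
  inv_mul_cancel := hG.mul_group.inv_op
  mul_comm := hG.mul_comm

variable {circG : G → G → G} {ceG : G} {cinvG : G → G}
  {mulH : H → H → H} {circH : H → H → H} {ceH : H} {cinvH : H → H} {Φ : G → H → H}

theorem IsSemiTrivialAction.apply_unit (hΦ : IsSemiTrivialAction circG mulH circH Φ)
    (hH : IsGroup circH ceH cinvH) (a : G) : Φ a ceH = ceH :=
  hH.eq_unit_of_op_self <| by rw [← (hΦ.1 a).2.2, hH.one_op]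

theorem IsSemiTrivialAction.unit_apply (hΦ : IsSemiTrivialAction circG mulH circH Φ)
    (hG : IsGroup circG ceG cinvG) (h : H) : Φ ceG h = h :=
  (hΦ.1 ceG).1.1 <| by rw [← hΦ.2, hG.one_op]

end Units

section Semidirect

variable {G H : Type*} {circG : G → G → G} {ceG : G} {cinvG : G → G}
  {circH : H → H → H} {ceH : H} {cinvH : H → H} {Φ : G → H → H}

/-- The operation `∘` of the semi-direct product brace `H ⋊_Φ G`; the operation `·` is the
componentwise product of `H × G`. -/
def semidirectCirc (circG : G → G → G) (circH : H → H → H) (Φ : G → H → H) :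
    H × G → H × G → H × G :=
  fun p q => (circH p.1 (Φ p.2 q.1), circG p.2 q.2)

theorem IsGroup.semidirect_s12 {mulH : H → H → H} (hG : IsGroup circG ceG cinvG)
    (hH : IsGroup circH ceH cinvH) (hΦ : IsSemiTrivialAction circG mulH circH Φ) :
    IsGroup (semidirectCirc circG circH Φ) (ceH, ceG)
      (fun p => (Φ (cinvG p.2) (cinvH p.1), cinvG p.2)) where
  assoc p q r := by
    have map_circ (a : G) (h k : H) : Φ a (circH h k) = circH (Φ a h) (Φ a k) := (hΦ.1 a).2.2 h k
    simp only [semidirectCirc, hΦ.2, map_circ, hG.assoc, hH.assoc]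
  one_op p := by simp only [semidirectCirc, hΦ.unit_apply hG, hG.one_op, hH.one_op]
  op_one p := by simp only [semidirectCirc, hΦ.apply_unit hH, hG.op_one, hH.op_one]
  inv_op p := by
    simp only [semidirectCirc, ← (hΦ.1 _).2.2, hG.inv_op, hH.inv_op, hΦ.apply_unit hH]
  op_inv p := by
    simp only [semidirectCirc, ← hΦ.2, hG.op_inv, hH.op_inv, hΦ.unit_apply hG]

theorem isGroup_mul (P : Type*) [Group P] : IsGroup (· * ·) (1 : P) (·⁻¹) :=
  ⟨mul_assoc, one_mul, mul_one, inv_mul_cancel, mul_inv_cancel⟩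

theorem IsBrace.semidirect_s12 [CommGroup G] [CommGroup H]
    (hG : IsBrace (· * ·) (1 : G) (·⁻¹) circG ceG cinvG)
    (hH : IsBrace (· * ·) (1 : H) (·⁻¹) circH ceH cinvH)
    (hΦ : IsSemiTrivialAction circG (· * ·) circH Φ) :
    IsBrace (· * ·) (1 : H × G) (·⁻¹) (semidirectCirc circG circH Φ) (ceH, ceG)
      (fun p => (Φ (cinvG p.2) (cinvH p.1), cinvG p.2)) where
  mul_group := isGroup_mul _
  mul_comm := _root_.mul_comm
  circ_group := hG.circ_group.semidirect_s12 hH.circ_group hΦ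
  compat p q r := by
    refine Prod.ext ?_ (hG.compat p.2 q.2 r.2)
    exact (congrArg (circH p.1) ((hΦ.1 p.2).2.1 q.1 r.1)).trans (hH.compat p.1 _ _)

end Semidirect

section Graph

theorem isLeftIdealOf_subgroup_iff {P : Type*} [Group P] {cop : P → P → P} {K : Subgroup P} :
    IsLeftIdealOf (· * ·) 1 cop (K : Set P) ↔ ∀ p, ∀ x ∈ K, p⁻¹ * cop p x ∈ K := by
  constructor
  · rintro ⟨-, -, -, hK⟩ p x hx
    exact hK p x hx _ (mul_inv_cancel_left p _)
  · intro hK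
    refine ⟨K.one_mem, fun p hp q hq => K.mul_mem hp hq,
      fun p hp => ⟨p⁻¹, K.inv_mem hp, mul_inv_cancel p, inv_mul_cancel p⟩, ?_⟩
    intro p x hx r hr
    simpa only [← hr, inv_mul_cancel_left, SetLike.mem_coe] using hK p x hx

variable {G H : Type*} [Group H] {circG : G → G → G} {circH : H → H → H} {Φ : G → H → H}

theorem isLeftIdealOf_fst_eq_one [Group G] {mulH : H → H → H} {cinvH : H → H}
    (hH : IsGroup circH 1 cinvH) (hΦ : IsSemiTrivialAction circG mulH circH Φ) :
    IsLeftIdealOf (· * ·) (1 : H × G) (semidirectCirc circG circH Φ) {q | q.1 = 1} := by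
  refine isLeftIdealOf_subgroup_iff (K := (MonoidHom.fst H G).ker).2 fun p x hx => ?_
  rw [MonoidHom.mem_ker, MonoidHom.coe_fst] at hx ⊢
  simp [semidirectCirc, hx, hΦ.apply_unit hH, hH.op_one]

theorem existsUnique_eq_graph_mul [Group G] (B : H → G) (q : H × G) :
    ∃! xy : (H × G) × (H × G),
      xy.1 ∈ {q : H × G | B q.1 = q.2} ∧ xy.2 ∈ {q : H × G | q.1 = 1} ∧ q = xy.1 * xy.2 := by
  refine ⟨((q.1, B q.1), (1, (B q.1)⁻¹ * q.2)), by simp, ?_⟩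
  rintro ⟨⟨h, b⟩, ⟨k, a⟩⟩ ⟨hb, hk, rfl⟩
  obtain rfl : B h = b := hb
  obtain rfl : k = 1 := hk
  simp

variable [CommGroup G]

theorem isLeftIdealOf_monoidHom_graph_iff (f : H →* G) :
    IsLeftIdealOf (· * ·) 1 (semidirectCirc circG circH Φ) (f.graph : Set (H × G)) ↔
      ∀ a h k, circG (f h * a) (f k) = f (circH h (Φ (f h * a) k)) * a := by
  have shift (x a y c : G) : x⁻¹ * y = (x * a)⁻¹ * c ↔ c = y * a := by
    rw [mul_inv, mul_assoc, mul_right_inj, eq_inv_mul_iff_mul_eq, mul_comm, eq_comm]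
  calc
    _ ↔ ∀ h a k, (f h)⁻¹ * f (circH h (Φ a k)) = a⁻¹ * circG a (f k) := by
      rw [isLeftIdealOf_subgroup_iff]
      simp [semidirectCirc, MonoidHom.mem_graph]
    _ ↔ ∀ h a k, (f h)⁻¹ * f (circH h (Φ (f h * a) k)) = (f h * a)⁻¹ * circG (f h * a) (f k) :=
      forall_congr' fun h => (Equiv.mulLeft (f h)).forall_congr_right.symm
    _ ↔ _ := by
      simp only [shift]
      exact forall_comm

theorem isLeftIdealOf_graph_iff (B : H → G) :
    IsLeftIdealOf (· * ·) 1 (semidirectCirc circG circH Φ) {q : H × G | B q.1 = q.2} ↔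
      IsEnhancedRelRBO (· * ·) circG (· * ·) circH Φ B := by
  have graph_iff (hB : ∀ h k, B (h * k) = B h * B k) :
      IsLeftIdealOf (· * ·) 1 (semidirectCirc circG circH Φ) {q : H × G | B q.1 = q.2} ↔
        ∀ a h k, circG (B h * a) (B k) = B (circH h (Φ (B h * a) k)) * a :=
    isLeftIdealOf_monoidHom_graph_iff (MonoidHom.mk' B hB)
  constructor
  · intro hgraph
    have map_mul (h k : H) : B (h * k) = B h * B k := by
      simpa using hgraph.2.1 (h, B h) (by simp) (k, B k) (by simp)
    exact ⟨fun h k => (map_mul h k).symm, (graph_iff map_mul).1 hgraph⟩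
  · rintro ⟨mul_map, hR⟩
    exact (graph_iff fun h k => (mul_map h k).symm).2 hR

theorem admitsFactorization_graph_iff {mulH : H → H → H} {cinvH : H → H}
    (hH : IsGroup circH 1 cinvH) (hΦ : IsSemiTrivialAction circG mulH circH Φ)
    (B : H → G) :
    AdmitsFactorization (· * ·) 1 (semidirectCirc circG circH Φ)
      {q : H × G | B q.1 = q.2} {q | q.1 = 1} ↔
      IsEnhancedRelRBO (· * ·) circG (· * ·) circH Φ B :=
  (and_iff_left ⟨isLeftIdealOf_fst_eq_one hH hΦ, existsUnique_eq_graph_mul B⟩).trans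
    (isLeftIdealOf_graph_iff B)

end Graph

section Shear

variable {G H : Type*} [Group G]

/-- The bijection `ξ_B(h, a) = (h, B(h) · a)` of `H × G`. -/
def mulShear (B : H → G) : H × G ≃ H × G :=
  (Equiv.refl H).prodShear fun h => Equiv.mulLeft (B h)

theorem mulShear_preimage_graph (B : H → G) :
    mulShear B ⁻¹' {q | B q.1 = q.2} = {p | p.2 = 1} := by
  ext p
  simp [mulShear]

theorem pullbackOp_mulShear_mul [Group H] (B : H → G) (p q : H × G) :
    pullbackOp (mulShear B) (· * ·) p q =
      (p.1 * q.1, (B (p.1 * q.1))⁻¹ * B p.1 * p.2 * B q.1 * q.2) := by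
  simp [pullbackOp, mulShear, mul_assoc]

end Shear

/-- The brace `(H × G, •, ⋆)` obtained by transporting the semi-direct
product structure along `ξ_B(h, a) = (h, B(h) ·_G a)` admits a factorization through the
left ideals `H × {e_G}` and `{e_H} × G` if and only if `B` is an enhanced relative
Rota-Baxter operator. -/
theorem statement12 {G H : Type*}
    (mulG : G → G → G) (eG : G) (invG : G → G)
    (circG : G → G → G) (ceG : G) (cinvG : G → G)
    (mulH : H → H → H) (eH : H) (invH : H → H)
    (circH : H → H → H) (ceH : H) (cinvH : H → H)
    (hG : IsBrace mulG eG invG circG ceG cinvG)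
    (hH : IsBrace mulH eH invH circH ceH cinvH)
    (Φ : G → H → H) (hΦ : IsSemiTrivialAction circG mulH circH Φ)
    (B : H → G)
    (bullet star : H × G → H × G → H × G)
    (hbullet : ∀ p q : H × G, bullet p q = (mulH p.1 q.1,
      mulG (mulG (mulG (mulG (invG (B (mulH p.1 q.1))) (B p.1)) p.2) (B q.1)) q.2))
    (hstar : ∀ p q : H × G, star p q = (circH p.1 (Φ (mulG (B p.1) p.2) q.1),
      mulG (invG (B (circH p.1 (Φ (mulG (B p.1) p.2) q.1))))
        (circG (mulG (B p.1) p.2) (mulG (B q.1) q.2)))) :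
    (∃ invP cinvP : H × G → H × G,
      IsBrace bullet (eH, invG (B eH)) invP star (eH, invG (B eH)) cinvP) ∧
    ((IsLeftIdealOf bullet (eH, invG (B eH)) star {p : H × G | p.2 = eG} ∧
      IsLeftIdealOf bullet (eH, invG (B eH)) star {p : H × G | p.1 = eH} ∧
      ∀ p : H × G, ∃! xy : (H × G) × (H × G),
        xy.1 ∈ {p : H × G | p.2 = eG} ∧ xy.2 ∈ {p : H × G | p.1 = eH} ∧
        p = bullet xy.1 xy.2) ↔
      IsEnhancedRelRBO mulG circG mulH circH Φ B) := by
  obtain rfl := hG.circ_unit_eq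
  obtain rfl := hH.circ_unit_eq
  let _ : CommGroup G := hG.commGroup
  let _ : CommGroup H := hH.commGroup
  obtain rfl : bullet = pullbackOp (mulShear B) (· * ·) :=
    funext₂ fun p q => (hbullet p q).trans (pullbackOp_mulShear_mul B p q).symm
  obtain rfl : star = pullbackOp (mulShear B) (semidirectCirc circG circH Φ) := funext₂ hstar
  have unit_eq : (1, (B 1)⁻¹) = (mulShear B).symm 1 := Prod.ext rfl (mul_one _).symm
  refine ⟨⟨_, _, unit_eq ▸ (hG.semidirect_s12 hH hΦ).pullback (mulShear B)⟩, ?_⟩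
  have factorization_iff := (admitsFactorization_pullback_iff (mulShear B)).trans
    (admitsFactorization_graph_iff hH.circ_group hΦ B)
  rwa [mulShear_preimage_graph, ← unit_eq] at factorization_iff
end

section
/- Let (G,B) be an enhanced Rota-Baxter two-sided brace, with descendent brace G_B = (G,·,∗) where a ∗ b = a ∘ Ad∘_{B(a)}(b). Define B₊ : G → G by B₊(a) = a ∘ B(a). Then B₊ is a homomorphism of braces from G_B to (G,·,∘): B₊(a · b) = B₊(a) · B₊(b) and B₊(a ∗ b) = B₊(a) ∘ B₊(b) for all a,b ∈ G. -/
/-- The operation `a ∗ b = a ∘ Ad∘_{B(a)}(b)` of the descendent brace `G_B = (G, ·, ∗)`. -/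
def descendentCirc {G : Type*} (circ : G → G → G) (cinv : G → G) (B : G → G) (a b : G) : G :=
  circ a (adC circ cinv (B a) b)

/-- The map `B₊(a) = a ∘ B(a)` attached to a Rota-Baxter operator `B`. -/
def plusMap {G : Type*} (circ : G → G → G) (B : G → G) (a : G) : G :=
  circ a (B a)

section

variable {G : Type*} {mul : G → G → G} {e : G} {inv : G → G}
  {circ : G → G → G} {ce : G} {cinv : G → G} {B : G → G}

namespace IsGroup

theorem op_inv_cancel_right (hmul : IsGroup mul e inv) (a b : G) : mul (mul a b) (inv b) = a := by
  rw [hmul.assoc, hmul.op_inv, hmul.op_one]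

theorem inv_op_cancel_right (hmul : IsGroup mul e inv) (a b : G) : mul (mul a (inv b)) b = a := by
  rw [hmul.assoc, hmul.inv_op, hmul.op_one]

theorem inv_one (hmul : IsGroup mul e inv) : inv e = e := by
  rw [← hmul.one_op (inv e), hmul.op_inv]

theorem eq_one_of_op_self_eq (hmul : IsGroup mul e inv) {a : G} (ha : mul a a = a) : a = e := by
  rw [← hmul.op_inv_cancel_right a a, ha, hmul.op_inv]

theorem adC_one (hcirc : IsGroup circ ce cinv) (b : G) : adC circ cinv ce b = b := by
  rw [adC, hcirc.one_op, hcirc.inv_one, hcirc.op_one]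

theorem adC_op (hcirc : IsGroup circ ce cinv) (a b : G) :
    circ (adC circ cinv a b) a = circ a b :=
  hcirc.inv_op_cancel_right (circ a b) a

end IsGroup

theorem IsBrace.ce_eq_e (hG : IsBrace mul e inv circ ce cinv) : ce = e := by
  have hmul := hG.mul_group
  have inv_ce : e = inv ce := by
    simpa only [hG.circ_group.one_op, hmul.one_op, hmul.op_one] using hG.compat ce e e
  rw [← hmul.op_inv ce, ← inv_ce, hmul.op_one]

namespace IsRBTwoSided

theorem map_one (hmul : IsGroup mul e inv) (hB : IsRBTwoSided mul circ cinv B) : B e = e :=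
  hmul.eq_one_of_op_self_eq (by rw [hB.1, hmul.one_op])

theorem plusMap_descendentCirc (hcirc : IsGroup circ ce cinv)
    (hB : IsRBTwoSided mul circ cinv B) (a b : G) :
    plusMap circ B (descendentCirc circ cinv B a b) =
      circ (plusMap circ B a) (plusMap circ B b) :=
  calc circ (circ a (adC circ cinv (B a) b)) (B (circ a (adC circ cinv (B a) b)))
    _ = circ (circ a (adC circ cinv (B a) b)) (circ (B a) (B b)) := by rw [hB.2]
    _ = circ (circ a (circ (adC circ cinv (B a) b) (B a))) (B b) := by simp only [hcirc.assoc]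
    _ = circ (circ a (circ (B a) b)) (B b) := by rw [hcirc.adC_op]
    _ = circ (circ a (B a)) (circ b (B b)) := by simp only [hcirc.assoc]

end IsRBTwoSided

namespace IsEnhancedRBTwoSided

theorem map_circ (hmul : IsGroup mul e inv) (hcirc : IsGroup circ e cinv)
    (hB : IsEnhancedRBTwoSided mul circ cinv B) (a b : G) :
    B (circ a b) = mul (B b) (B a) := by
  have map_eq : B b = mul (B (circ a b)) (inv (B a)) := by
    simpa only [hmul.op_inv, hcirc.one_op, hcirc.adC_one] using hB.2 a b (inv (B a))
  rw [map_eq, hmul.inv_op_cancel_right]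

theorem map_adC (hmul : IsGroup mul e inv) (mul_comm : ∀ a b, mul a b = mul b a)
    (hcirc : IsGroup circ e cinv) (hB : IsEnhancedRBTwoSided mul circ cinv B) (x b : G) :
    B (adC circ cinv x b) = B b :=
  calc B (circ (circ x b) (cinv x))
    _ = B (circ (cinv x) (circ x b)) := by
      rw [hB.map_circ hmul hcirc, mul_comm, ← hB.map_circ hmul hcirc]
    _ = B b := by rw [← hcirc.assoc, hcirc.inv_op, hcirc.one_op]

theorem circ_map (hmul : IsGroup mul e inv) (mul_comm : ∀ a b, mul a b = mul b a)
    (hcirc : IsGroup circ e cinv) (hB : IsEnhancedRBTwoSided mul circ cinv B) (x b : G) :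
    circ x (B b) = mul x (B b) :=
  calc circ x (B b)
    _ = mul (B (adC circ cinv x b)) x := by
      simpa only [hB.1.map_one hmul, hmul.one_op, hcirc.one_op] using hB.2 e b x
    _ = mul x (B b) := by rw [hB.map_adC hmul mul_comm hcirc, mul_comm]

theorem plusMap_mul (hmul : IsGroup mul e inv) (mul_comm : ∀ a b, mul a b = mul b a)
    (hcirc : IsGroup circ e cinv) (hB : IsEnhancedRBTwoSided mul circ cinv B) (a b : G) :
    plusMap circ B (mul a b) = mul (plusMap circ B a) (plusMap circ B b) := by
  have : Std.Associative mul := ⟨hmul.assoc⟩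
  have : Std.Commutative mul := ⟨mul_comm⟩
  have circ_map := hB.circ_map hmul mul_comm hcirc
  calc circ (mul a b) (B (mul a b))
    _ = mul (mul a b) (mul (B a) (B b)) := by rw [circ_map, hB.1.1]
    _ = mul (mul a (B a)) (mul b (B b)) := by ac_rfl
    _ = mul (circ a (B a)) (circ b (B b)) := by rw [circ_map, circ_map]

end IsEnhancedRBTwoSided

theorem statement16_general (hmul : IsGroup mul e inv) (mul_comm : ∀ a b, mul a b = mul b a)
    (hcirc : IsGroup circ e cinv) (hB : IsEnhancedRBTwoSided mul circ cinv B) :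
    IsBraceHom mul (descendentCirc circ cinv B) mul circ (plusMap circ B) :=
  ⟨hB.plusMap_mul hmul mul_comm hcirc, hB.1.plusMap_descendentCirc hcirc⟩

end

/-- For an enhanced Rota-Baxter two-sided brace `(G, B)` with descendent
brace `G_B = (G, ·, ∗)`, `a ∗ b = a ∘ Ad∘_{B(a)}(b)`, the map `B₊(a) = a ∘ B(a)` is a
homomorphism of braces from `G_B` to `(G, ·, ∘)`. -/
theorem statement16 {G : Type*} (mul : G → G → G) (e : G) (inv : G → G)
    (circ : G → G → G) (ce : G) (cinv : G → G)
    (hG : IsTwoSidedBrace mul e inv circ ce cinv)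
    (B : G → G) (hB : IsEnhancedRBTwoSided mul circ cinv B)
    (Bplus : G → G) (hBplus : ∀ a, Bplus a = circ a (B a)) :
    IsBraceHom mul (fun a b => circ a (adC circ cinv (B a) b)) mul circ Bplus := by
  obtain rfl := hG.1.ce_eq_e
  obtain rfl : Bplus = plusMap circ B := funext hBplus
  exact statement16_general hG.1.mul_group hG.1.mul_comm hG.1.circ_group hB
end
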